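/- For each nonzero integer n, each of the rational numbers 3/n, 1 − 2/n, 1 − 3/n, 1 − 4/n, 1 − 6/n, and 2 − 1/n is either an integer or a relation number. -/

import Mathlib

/-- `a = [[1,0],[1,1]]` as an element of `SL(2, ℂ)`. -/
def matA : Matrix.SpecialLinearGroup (Fin 2) ℂ :=
  ⟨!![1, 0; 1, 1], by simp [Matrix.det_fin_two_of]⟩

/-- `b_q = [[1,q],[0,1]]` as an element of `SL(2, ℂ)`. -/
def matB (q : ℂ) : Matrix.SpecialLinearGroup (Fin 2) ℂ :=
  ⟨!![1, q; 0, 1], by simp [Matrix.det_fin_two_of]⟩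

/-- `q` is a relation number: the homomorphism `F₂ → SL(2,ℂ)`, `x ↦ a`, `y ↦ b_q`,
is not injective. -/
def IsRelationNumber (q : ℂ) : Prop :=
  ¬ Function.Injective
    (FreeGroup.lift (fun i : Bool => if i then matA else matB q) :
      FreeGroup Bool →* Matrix.SpecialLinearGroup (Fin 2) ℂ)

/-- `q` is an `ℓ`-step relation number: there are `k ≤ ℓ` and nonzero integers
`m_1, …, m_{2k+1}` with `b_q^{m_1} a^{m_2} ⋯ b_q^{m_{2k+1}}` lower triangular. -/
def IsStepRelationNumber (ℓ : ℕ) (q : ℂ) : Prop :=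
  ∃ k : ℕ, k ≤ ℓ ∧ ∃ m : Fin (2 * k + 1) → ℤ, (∀ i, m i ≠ 0) ∧
    ((List.ofFn (fun i : Fin (2 * k + 1) =>
      (if (i : ℕ) % 2 = 0 then matB q else matA) ^ (m i))).prod).val 0 1 = 0

/-- The residue class `w + smℤ` is `s`-good with good representative `w`. -/
def IsGoodRep (s w m : ℤ) : Prop :=
  ∃ y : ℤ, y * (Int.gcd w (s * m) : ℤ) ∣ m * (Int.gcd w s : ℤ) ∧
    (w ∣ s * m * y + (Int.gcd w (s * m) : ℤ) ∨ w ∣ s * m * y - (Int.gcd w (s * m) : ℤ))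

/-!
Conjugating `a` by a matrix `W` gives something that commutes with `a` exactly when `W` is lower
triangular. A word `w` that is lower triangular at `q` but not at some other parameter therefore
yields the nontrivial relation `[w x w⁻¹, x] = 1` at `q`. For an alternating word with nonzero
exponents the other parameter can be taken to be `4`, where Sanov's ping-pong argument shows that
the upper right entry is never zero; so every `ℓ`-step relation number is a relation number.

The rest is a list of words. One step gives all sums of two unit fractions, palindromic two-step
words give `1 - 2 / n` and `2 - 1 / n`, and a three-step word gives `1 - s / n` for `n ≡ -1 mod s`.
Replacing `(s, n)` by `(-s, -n)` covers `n ≡ 1 mod s`, and for `s ∈ {3, 4, 6}` every other `n`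
shares a factor with `s`, so that the fraction can be cancelled.
-/

open scoped MatrixGroups

open Matrix.SpecialLinearGroup (coe_mul coe_inv)

section AlternatingProd

variable {G H : Type*} [Group G] [Group H]

/-- The alternating product `b ^ m₀ * a ^ m₁ * ⋯ * b ^ m₂ₖ` of powers of two group elements, written
as in `IsStepRelationNumber` so that it applies both to words in the free group and to their
images. -/
def alternatingProd (b a : G) {k : ℕ} (m : Fin (2 * k + 1) → ℤ) : G :=
  (List.ofFn fun i : Fin (2 * k + 1) => (if (i : ℕ) % 2 = 0 then b else a) ^ m i).prod

theorem alternatingProd_zero (b a : G) (m : Fin (2 * 0 + 1) → ℤ) :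
    alternatingProd b a m = b ^ m 0 := by
  simp [alternatingProd]

theorem alternatingProd_succ (b a : G) {k : ℕ} (m : Fin (2 * (k + 1) + 1) → ℤ) :
    alternatingProd b a m =
      b ^ m 0 * (a ^ m 1 * alternatingProd b a fun i : Fin (2 * k + 1) => m i.succ.succ) := by
  have parity_shift (i : ℕ) : (i + 1 + 1) % 2 = i % 2 := by omega
  change (List.ofFn fun i : Fin (2 * k + 1 + 1 + 1) =>
    (if (i : ℕ) % 2 = 0 then b else a) ^ m i).prod = _
  rw [List.ofFn_succ, List.ofFn_succ, List.prod_cons, List.prod_cons]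
  simp only [Fin.val_zero, Fin.val_succ, parity_shift]
  rfl

theorem map_alternatingProd (f : G →* H) (b a : G) {k : ℕ} (m : Fin (2 * k + 1) → ℤ) :
    f (alternatingProd b a m) = alternatingProd (f b) (f a) m := by
  simp only [alternatingProd, map_list_prod, List.map_ofFn, Function.comp_def, map_zpow,
    apply_ite f]

end AlternatingProd

theorem coe_matA : matA.val = !![1, 0; 1, 1] := rfl

theorem coe_matB (q : ℂ) : (matB q).val = !![1, q; 0, 1] := rfl

theorem coe_matA_zpow (m : ℤ) : (matA ^ m).val = !![1, 0; (m : ℂ), 1] := by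
  induction m using Int.induction_on with
  | zero => simp [Matrix.one_fin_two]
  | succ k ih =>
    rw [zpow_add_one, coe_mul, ih]
    simp [coe_matA]
  | pred k ih =>
    rw [zpow_sub_one, coe_mul, ih, coe_inv]
    simp [coe_matA, Matrix.adjugate_fin_two, sub_eq_add_neg]

theorem coe_matB_zpow (q : ℂ) (m : ℤ) : (matB q ^ m).val = !![1, m * q; 0, 1] := by
  induction m using Int.induction_on with
  | zero => simp [Matrix.one_fin_two]
  | succ k ih =>
    rw [zpow_add_one, coe_mul, ih]
    simp [coe_matB, add_one_mul, add_comm]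
  | pred k ih =>
    rw [zpow_sub_one, coe_mul, ih, coe_inv]
    simp [coe_matB, Matrix.adjugate_fin_two, sub_mul, neg_add_eq_sub]

section LeftMultiplication

variable (m : ℤ) (W : SL(2, ℂ)) (j : Fin 2)

theorem matA_zpow_mul_apply_zero : (matA ^ m * W).val 0 j = W.val 0 j := by
  rw [coe_mul, coe_matA_zpow, Matrix.mul_apply]
  simp

theorem matA_zpow_mul_apply_one : (matA ^ m * W).val 1 j = W.val 1 j + m * W.val 0 j := by
  rw [coe_mul, coe_matA_zpow, Matrix.mul_apply]
  simp [add_comm]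

theorem matB_zpow_mul_apply_zero (q : ℂ) :
    (matB q ^ m * W).val 0 j = W.val 0 j + m * q * W.val 1 j := by
  rw [coe_mul, coe_matB_zpow, Matrix.mul_apply]
  simp

theorem matB_zpow_mul_apply_one (q : ℂ) : (matB q ^ m * W).val 1 j = W.val 1 j := by
  rw [coe_mul, coe_matB_zpow, Matrix.mul_apply]
  simp

end LeftMultiplication

theorem commute_conj_matA_iff (W : SL(2, ℂ)) :
    Commute (W * matA * W⁻¹) matA ↔ W.val 0 1 = 0 := by
  have commutator_apply (i j : Fin 2) :
      (W * matA * W⁻¹ * matA).val i j - (matA * (W * matA * W⁻¹)).val i j =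
        !![-W.val 0 1 ^ 2, 0; -2 * W.val 0 1 * W.val 1 1, W.val 0 1 ^ 2] i j := by
    simp only [coe_mul, coe_inv, coe_matA, Matrix.adjugate_fin_two]
    fin_cases i <;> fin_cases j <;> simp [Matrix.mul_apply] <;> ring
  rw [commute_iff_eq]
  constructor
  · intro commutes
    simpa [commutes] using commutator_apply 0 0
  · intro lower_triangular
    refine Matrix.SpecialLinearGroup.ext _ _ fun i j => sub_eq_zero.1 ?_
    rw [commutator_apply, lower_triangular]
    fin_cases i <;> fin_cases j <;> simp

/-- The homomorphism `F₂ → SL(2, ℂ)`, `x ↦ a`, `y ↦ b_q`, whose injectivity defines relation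
numbers; `x` is the generator `true` and `y` the generator `false`. -/
def generatorHom (q : ℂ) : FreeGroup Bool →* SL(2, ℂ) :=
  FreeGroup.lift fun i => if i then matA else matB q

theorem generatorHom_of_true (q : ℂ) : generatorHom q (FreeGroup.of true) = matA := by
  simp [generatorHom]

theorem generatorHom_of_false (q : ℂ) : generatorHom q (FreeGroup.of false) = matB q := by
  simp [generatorHom]

theorem isRelationNumber_of_generatorHom_apply_eq_zero {q p : ℂ} (w : FreeGroup Bool)
    (hq : (generatorHom q w).val 0 1 = 0) (hp : (generatorHom p w).val 0 1 ≠ 0) :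
    IsRelationNumber q := by
  intro injective
  have commute_conj_iff (r : ℂ) :
      Commute (generatorHom r (w * .of true * w⁻¹)) (generatorHom r (.of true)) ↔
        (generatorHom r w).val 0 1 = 0 := by
    simp only [map_mul, map_inv, generatorHom_of_true, commute_conj_matA_iff]
  have commute_in_free : Commute (w * .of true * w⁻¹) (.of true) :=
    .of_map (f := generatorHom q) injective ((commute_conj_iff q).2 hq)
  exact hp ((commute_conj_iff p).1 (commute_in_free.map (generatorHom p)))

theorem one_le_norm_intCast {m : ℤ} (hm : m ≠ 0) : 1 ≤ ‖(m : ℂ)‖ := by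
  rw [Complex.norm_intCast]
  exact_mod_cast Int.one_le_abs hm

theorem norm_le_two_mul_norm_add_intCast_mul {x y : ℂ} {m : ℤ} (hm : m ≠ 0)
    (h : 2 * ‖y‖ ≤ ‖x‖) : ‖x‖ ≤ 2 * ‖y + m * x‖ := by
  have norm_x_le : ‖x‖ ≤ ‖m * x‖ := by
    rw [norm_mul]
    exact le_mul_of_one_le_left (norm_nonneg x) (one_le_norm_intCast hm)
  linarith [norm_le_add_norm_add' y (m * x)]

theorem two_mul_norm_le_norm_add_intCast_mul_four_mul {x y : ℂ} {m : ℤ} (hm : m ≠ 0)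
    (h : ‖x‖ ≤ 2 * ‖y‖) : 2 * ‖y‖ ≤ ‖x + m * 4 * y‖ := by
  have four_mul_norm_y_le : 4 * ‖y‖ ≤ ‖m * 4 * y‖ := by
    rw [norm_mul, norm_mul, Complex.norm_ofNat]
    gcongr
    linarith [one_le_norm_intCast hm]
  linarith [norm_le_add_norm_add' x (m * 4 * y)]

theorem norm_alternatingProd_matB_four {k : ℕ} (m : Fin (2 * k + 1) → ℤ) (hm : ∀ i, m i ≠ 0) :
    0 < ‖(alternatingProd (matB 4) matA m).val 0 1‖ ∧
      2 * ‖(alternatingProd (matB 4) matA m).val 1 1‖ ≤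
        ‖(alternatingProd (matB 4) matA m).val 0 1‖ := by
  induction k with
  | zero =>
    have apply_zero : (matB 4 ^ m 0).val 0 1 = m 0 * 4 := by simp [coe_matB_zpow]
    have apply_one : (matB 4 ^ m 0).val 1 1 = 1 := by simp [coe_matB_zpow]
    rw [alternatingProd_zero, apply_zero, apply_one, norm_mul, Complex.norm_ofNat, norm_one]
    constructor <;> linarith [one_le_norm_intCast (hm 0)]
  | succ k ih =>
    obtain ⟨x_pos, y_le_x⟩ := ih (fun i => m i.succ.succ) fun i => hm _
    rw [alternatingProd_succ, matB_zpow_mul_apply_zero, matB_zpow_mul_apply_one,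
      matA_zpow_mul_apply_zero, matA_zpow_mul_apply_one]
    have x_le_y' := norm_le_two_mul_norm_add_intCast_mul (hm 1) y_le_x
    have y'_le_x' := two_mul_norm_le_norm_add_intCast_mul_four_mul (hm 0) x_le_y'
    exact ⟨x_pos.trans_le (x_le_y'.trans y'_le_x'), y'_le_x'⟩

theorem IsStepRelationNumber.isRelationNumber {ℓ : ℕ} {q : ℂ} (h : IsStepRelationNumber ℓ q) :
    IsRelationNumber q := by
  obtain ⟨k, -, m, hm, hq⟩ := h
  have generatorHom_word (r : ℂ) :
      generatorHom r (alternatingProd (.of false) (.of true) m) =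
        alternatingProd (matB r) matA m := by
    rw [map_alternatingProd, generatorHom_of_false, generatorHom_of_true]
  refine isRelationNumber_of_generatorHom_apply_eq_zero (p := 4)
    (alternatingProd (.of false) (.of true) m) ?_ ?_
  · rw [generatorHom_word]
    exact hq
  · rw [generatorHom_word]
    exact norm_pos_iff.1 (norm_alternatingProd_matB_four m hm).1

theorem isStepRelationNumber_one_of_eq_zero {m₀ m₁ m₂ : ℤ} {q : ℂ} (hm₀ : m₀ ≠ 0) (hm₁ : m₁ ≠ 0)
    (hm₂ : m₂ ≠ 0) (h : m₀ + m₂ + m₀ * m₁ * m₂ * q = 0) : IsStepRelationNumber 1 q := by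
  refine ⟨1, le_rfl, ![m₀, m₁, m₂], by simp [Fin.forall_fin_succ, hm₀, hm₁, hm₂], ?_⟩
  calc
    _ = q * (m₀ + m₂ + m₀ * m₁ * m₂ * q) := by
      simp [List.ofFn_succ, coe_matA_zpow, coe_matB_zpow]
      ring
    _ = 0 := by rw [h, mul_zero]

theorem isStepRelationNumber_two_of_palindrome {m₀ m₁ m₂ : ℤ} {q : ℂ} (hm₀ : m₀ ≠ 0) (hm₁ : m₁ ≠ 0)
    (hm₂ : m₂ ≠ 0) (h : 2 * m₀ + m₂ * (1 + m₀ * m₁ * q) = 0) : IsStepRelationNumber 2 q := by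
  refine ⟨2, le_rfl, ![m₀, m₁, m₂, m₁, m₀], by simp [Fin.forall_fin_succ, hm₀, hm₁, hm₂], ?_⟩
  calc
    _ = q * (1 + m₀ * m₁ * q) * (2 * m₀ + m₂ * (1 + m₀ * m₁ * q)) := by
      simp [List.ofFn_succ, coe_matA_zpow, coe_matB_zpow]
      ring
    _ = 0 := by rw [h, mul_zero]

theorem isStepRelationNumber_three_of_eq_mul_one_sub {k n : ℤ} {q : ℂ} (hk : k ≠ 0)
    (hk1 : k + 1 ≠ 0) (hn : n ≠ 0) (h : n + 1 = k * n * (1 - q)) : IsStepRelationNumber 3 q := by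
  refine ⟨3, le_rfl, ![1, -1, -((k + 1) * n), -k, -1, 1, (k + 1) * n],
    by simp [Fin.forall_fin_succ, hn, hk, hk1], ?_⟩
  calc
    _ = q ^ 2 * (k + 1) * (1 - (k + 1) * n * (1 - q)) * (n + 1 - k * n * (1 - q)) := by
      simp [List.ofFn_succ, coe_matA_zpow, coe_matB_zpow, coe_matA, coe_matB, -zpow_neg,
        -Int.reduceNeg]
      ring
    _ = 0 := by rw [h, sub_self, mul_zero]

theorem isRelationNumber_one_div_add_one_div {m n : ℤ} (hm : m ≠ 0) (hn : n ≠ 0) :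
    IsRelationNumber (1 / m + 1 / n) := by
  have hm' : (m : ℂ) ≠ 0 := mod_cast hm
  have hn' : (n : ℂ) ≠ 0 := mod_cast hn
  refine (isStepRelationNumber_one_of_eq_zero hm (m₁ := -1) (by decide) hn ?_).isRelationNumber
  push_cast
  field_simp
  ring

theorem isRelationNumber_one_sub_two_div {n : ℤ} (hn : n ≠ 0) :
    IsRelationNumber (1 - 2 / n) := by
  have hn' : (n : ℂ) ≠ 0 := mod_cast hn
  refine (isStepRelationNumber_two_of_palindrome (m₀ := 1) (m₁ := -1) (m₂ := -n)
    (by decide) (by decide) (neg_ne_zero.2 hn) ?_).isRelationNumber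
  push_cast
  field_simp
  ring

theorem isRelationNumber_two_sub_one_div {n : ℤ} (hn : n ≠ 0) :
    IsRelationNumber (2 - 1 / n) := by
  have hn' : (n : ℂ) ≠ 0 := mod_cast hn
  refine (isStepRelationNumber_two_of_palindrome (m₀ := n) (m₁ := 1) (m₂ := -1)
    hn (by decide) (by decide) ?_).isRelationNumber
  push_cast
  field_simp
  ring

theorem isRelationNumber_div_of_dvd_add_one {s n : ℤ} (hn : n ≠ 0) (hn1 : n ≠ -1)
    (h : s ∣ n + 1) : IsRelationNumber (s / n) := by
  obtain ⟨k, hk⟩ := h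
  have hk0 : k ≠ 0 := by rintro rfl; omega
  have hn' : (n : ℂ) ≠ 0 := mod_cast hn
  have hk' : (k : ℂ) ≠ 0 := mod_cast hk0
  have hs : (n + 1 : ℂ) = s * k := mod_cast hk
  convert isRelationNumber_one_div_add_one_div hk0 (mul_ne_zero hk0 hn) using 1
  push_cast
  field_simp
  exact hs.symm

theorem isRelationNumber_one_sub_div_of_dvd_add_one {s n : ℤ} (hn : n ≠ 0) (hn1 : n ≠ -1)
    (h : s ∣ n + 1) : IsRelationNumber (1 - s / n) := by
  obtain ⟨k, hk⟩ := h
  have hk0 : k ≠ 0 := by rintro rfl; omega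
  have hn' : (n : ℂ) ≠ 0 := mod_cast hn
  by_cases hk1 : k + 1 = 0
  · have hs : s = -(n + 1) := by rw [eq_neg_of_add_eq_zero_left hk1] at hk; omega
    convert isRelationNumber_two_sub_one_div (neg_ne_zero.2 hn) using 1
    rw [hs]
    push_cast
    field_simp
    ring
  · have hs : (n + 1 : ℂ) = s * k := mod_cast hk
    refine (isStepRelationNumber_three_of_eq_mul_one_sub hk0 hk1 hn ?_).isRelationNumber
    field_simp
    linear_combination hs

/-- A rational number that is an integer or, viewed in `ℂ`, a relation number: the alternative in
the theorem, named so that it can be transported along equalities of rationals. -/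
def IsIntOrRelationNumber (r : ℚ) : Prop :=
  (∃ z : ℤ, r = z) ∨ IsRelationNumber (r : ℂ)

theorem div_induction_of_dvd_add_one {P : ℚ → Prop} (intCast : ∀ z : ℤ, P z)
    (of_dvd_add_one : ∀ {s n : ℤ}, n ≠ 0 → n ≠ -1 → s ∣ n + 1 → P (s / n)) {s n : ℤ} (hn : n ≠ 0)
    (h : s ∣ n + 1 ∨ s ∣ n - 1) : P (s / n) := by
  by_cases hn_neg_one : n = -1
  · simpa [hn_neg_one, div_neg] using intCast (-s)
  by_cases hn_one : n = 1
  · simpa [hn_one] using intCast s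
  obtain h_add | h_sub := h
  · exact of_dvd_add_one hn hn_neg_one h_add
  · have h_neg : -s ∣ -n + 1 := by rwa [neg_dvd, neg_add_eq_sub, dvd_sub_comm]
    simpa using of_dvd_add_one (neg_ne_zero.2 hn) (by omega) h_neg

namespace IsIntOrRelationNumber

variable {s n : ℤ}

theorem div (hn : n ≠ 0) (h : s ∣ n + 1 ∨ s ∣ n - 1) : IsIntOrRelationNumber (s / n) :=
  div_induction_of_dvd_add_one (fun z => .inl ⟨z, rfl⟩)
    (fun hn hn1 h => .inr <| by simpa using isRelationNumber_div_of_dvd_add_one hn hn1 h) hn h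

theorem one_sub_div (hn : n ≠ 0) (h : s ∣ n + 1 ∨ s ∣ n - 1) :
    IsIntOrRelationNumber (1 - s / n) :=
  div_induction_of_dvd_add_one (P := fun r => IsIntOrRelationNumber (1 - r))
    (fun z => .inl ⟨1 - z, by push_cast; rfl⟩)
    (fun hn hn1 h => .inr <| by simpa using isRelationNumber_one_sub_div_of_dvd_add_one hn hn1 h)
    hn h

theorem one_sub_two_div (hn : n ≠ 0) : IsIntOrRelationNumber (1 - 2 / n) :=
  .inr <| by simpa using isRelationNumber_one_sub_two_div hn

theorem two_sub_one_div (hn : n ≠ 0) : IsIntOrRelationNumber (2 - 1 / n) :=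
  .inr <| by simpa using isRelationNumber_two_sub_one_div hn

theorem three_div (hn : n ≠ 0) : IsIntOrRelationNumber (3 / n) := by
  by_cases h3 : 3 ∣ n
  · obtain ⟨k, rfl⟩ := h3
    have hk : 2 * k ≠ 0 := by omega
    right
    convert isRelationNumber_one_div_add_one_div hk hk using 1
    push_cast
    field
  · exact_mod_cast div (s := 3) hn (by omega)

theorem one_sub_three_div (hn : n ≠ 0) : IsIntOrRelationNumber (1 - 3 / n) := by
  by_cases h3 : 3 ∣ n
  · obtain ⟨k, rfl⟩ := h3
    convert one_sub_two_div (n := 2 * k) (by omega) using 2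
    push_cast
    field
  · exact_mod_cast one_sub_div (s := 3) hn (by omega)

theorem one_sub_four_div (hn : n ≠ 0) : IsIntOrRelationNumber (1 - 4 / n) := by
  by_cases h2 : 2 ∣ n
  · obtain ⟨k, rfl⟩ := h2
    convert one_sub_two_div (n := k) (by omega) using 2
    push_cast
    field
  · exact_mod_cast one_sub_div (s := 4) hn (by omega)

theorem one_sub_six_div (hn : n ≠ 0) : IsIntOrRelationNumber (1 - 6 / n) := by
  by_cases h2 : 2 ∣ n
  · obtain ⟨k, rfl⟩ := h2
    convert one_sub_three_div (n := k) (by omega) using 2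
    push_cast
    field
  by_cases h3 : 3 ∣ n
  · obtain ⟨k, rfl⟩ := h3
    convert one_sub_two_div (n := k) (by omega) using 2
    push_cast
    field
  · have n_mod_six : n % 6 = 1 ∨ n % 6 = 5 := by omega
    exact_mod_cast one_sub_div (s := 6) hn (by omega)

end IsIntOrRelationNumber

theorem stmt16 (n : ℤ) (hn : n ≠ 0) :
    ((∃ z : ℤ, (3 : ℚ) / n = z) ∨ IsRelationNumber (((3 : ℚ) / n : ℚ) : ℂ)) ∧
    ((∃ z : ℤ, 1 - (2 : ℚ) / n = z) ∨ IsRelationNumber ((1 - (2 : ℚ) / n : ℚ) : ℂ)) ∧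
    ((∃ z : ℤ, 1 - (3 : ℚ) / n = z) ∨ IsRelationNumber ((1 - (3 : ℚ) / n : ℚ) : ℂ)) ∧
    ((∃ z : ℤ, 1 - (4 : ℚ) / n = z) ∨ IsRelationNumber ((1 - (4 : ℚ) / n : ℚ) : ℂ)) ∧
    ((∃ z : ℤ, 1 - (6 : ℚ) / n = z) ∨ IsRelationNumber ((1 - (6 : ℚ) / n : ℚ) : ℂ)) ∧
    ((∃ z : ℤ, 2 - (1 : ℚ) / n = z) ∨ IsRelationNumber ((2 - (1 : ℚ) / n : ℚ) : ℂ)) :=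
  ⟨IsIntOrRelationNumber.three_div hn,
    IsIntOrRelationNumber.one_sub_two_div hn,
    IsIntOrRelationNumber.one_sub_three_div hn,
    IsIntOrRelationNumber.one_sub_four_div hn,
    IsIntOrRelationNumber.one_sub_six_div hn,
    IsIntOrRelationNumber.two_sub_one_div hn⟩
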